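/- Let ν₂(h) := (2·6^{1/3}·√π/Γ(1/3)²)·e^{-8h³/9}·U(1/6, 2/3; 8h³/9) for h ≥ 0. Then for every n ∈ ℕ: ∫₀^∞ hⁿ·ν₂(h) dh = Γ(5/6)·(2·3^{1/3})^{-n}·n!/(Γ(n/3+1)·Γ(n/3+5/6)). In particular (case n = 0), ν₂ is a probability density on [0,∞): ν₂ ≥ 0 and ∫₀^∞ ν₂(h) dh = 1. These are the moments of the height H(1) of the true self-repelling motion at time 1. -/

import Mathlib

/-!
Integrating the integral representation of `U` against `z ^ (c - 1) * exp (-z)` and exchanging the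
integrals leaves a Gamma integral in `z` followed by a beta integral in `s`:
`∫₀^∞ z ^ (c - 1) * exp (-z) * U(a, b; z) dz = Γ(c) Γ(c - b + 1) / Γ(a + c - b + 1)`.
The substitution `z = 8 h³ / 9` makes every moment of `ν₂`, of real order `q > -1`, such an integral
with `c = (q + 1) / 3`. The product `Γ((q + 1) / 3) Γ((q + 2) / 3)` that appears is rewritten by
Gauss's multiplication formula, a consequence of the Bohr-Mollerup theorem, and the constants
collapse by Legendre's duplication formula at `1 / 3`.
-/

open Real MeasureTheory Set Filter Topology

noncomputable section

/-- Confluent hypergeometric function of the second kind (Tricomi function),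
via its integral representation. -/
def tricomiU (a b z : ℝ) : ℝ :=
  (1 / Real.Gamma a) * ∫ s in Ioi (0:ℝ), Real.exp (-z * s) * s ^ (a - 1) * (1 + s) ^ (b - a - 1)

/-- The density of the height `H(1)` of the TSRM at time `1`. -/
def nu2 (h : ℝ) : ℝ :=
  (2 * (6:ℝ) ^ ((1:ℝ)/3) * Real.sqrt π / (Real.Gamma (1/3)) ^ 2) *
    Real.exp (-8 * h ^ 3 / 9) * tricomiU (1/6) (2/3) (8 * h ^ 3 / 9)

section Integrals

theorem integral_integral_swap_of_nonneg {α β : Type*} [MeasurableSpace α] [MeasurableSpace β]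
    {μ : Measure α} {ν : Measure β} [SFinite μ] [SFinite ν] {F : α → β → ℝ}
    (hF : AEStronglyMeasurable (Function.uncurry F) (μ.prod ν))
    (hF_nonneg : ∀ᵐ y ∂ν, ∀ᵐ x ∂μ, 0 ≤ F x y) (hF_int : ∀ᵐ y ∂ν, Integrable (F · y) μ)
    (hint : Integrable (fun y ↦ ∫ x, F x y ∂μ) ν) :
    ∫ x, ∫ y, F x y ∂ν ∂μ = ∫ y, ∫ x, F x y ∂μ ∂ν := by
  refine integral_integral_swap ((integrable_prod_iff' hF).2 ⟨hF_int, hint.congr ?_⟩)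
  filter_upwards [hF_nonneg] with y hy
  refine integral_congr_ae ?_
  filter_upwards [hy] with x hx
  exact (Real.norm_of_nonneg hx).symm

theorem integrableOn_rpow_mul_exp_neg_mul_Ioi {a r : ℝ} (ha : 0 < a) (hr : 0 < r) :
    IntegrableOn (fun t : ℝ ↦ t ^ (a - 1) * exp (-(r * t))) (Ioi 0) := by
  have := Gamma_pos_of_pos ha
  refine Integrable.of_integral_ne_zero ?_
  rw [integral_rpow_mul_exp_neg_mul_Ioi ha hr]
  positivity

theorem integral_rpow_mul_one_add_rpow_Ioi {a b : ℝ} (ha : 0 < a) (hb : 0 < b) :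
    ∫ s in Ioi (0 : ℝ), s ^ (a - 1) * (1 + s) ^ (-(a + b)) = Gamma a * Gamma b / Gamma (a + b) := by
  have hab : 0 < a + b := by positivity
  -- `F` is a Gamma integrand in each variable, so Fubini evaluates its double integral twice.
  let F : ℝ → ℝ → ℝ := fun s t ↦ s ^ (a - 1) * (t ^ (a + b - 1) * exp (-((1 + s) * t)))
  have hF (s t : ℝ) :
      F s t = t ^ (a + b - 1) * exp (-t) * (s ^ (a - 1) * exp (-(t * s))) := by
    simp only [F]
    rw [show -((1 + s) * t) = -t + -(t * s) by ring, exp_add]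
    ring
  have inner_t : ∀ s ∈ Ioi (0 : ℝ),
      ∫ t in Ioi 0, F s t = Gamma (a + b) * (s ^ (a - 1) * (1 + s) ^ (-(a + b))) := by
    intro s (hs : 0 < s)
    have hs' : 0 < 1 + s := by positivity
    simp only [F]
    rw [integral_const_mul, integral_rpow_mul_exp_neg_mul_Ioi hab hs', one_div,
      inv_rpow hs'.le, ← rpow_neg hs'.le]
    ring
  have inner_s : ∀ t ∈ Ioi (0 : ℝ),
      ∫ s in Ioi 0, F s t = Gamma a * (t ^ (b - 1) * exp (-(1 * t))) := by
    intro t (ht : 0 < t)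
    simp only [hF]
    rw [integral_const_mul, integral_rpow_mul_exp_neg_mul_Ioi ha ht, one_div, inv_rpow ht.le,
      add_sub_assoc, rpow_add ht, one_mul]
    field_simp
  have swap : ∫ s in Ioi 0, ∫ t in Ioi 0, F s t = ∫ t in Ioi 0, ∫ s in Ioi 0, F s t := by
    refine integral_integral_swap_of_nonneg (by unfold Function.uncurry; fun_prop)
      (ae_restrict_of_forall_mem measurableSet_Ioi fun t (ht : 0 < t) ↦
        ae_restrict_of_forall_mem measurableSet_Ioi fun s (hs : 0 < s) ↦ by positivity)
      (ae_restrict_of_forall_mem measurableSet_Ioi fun t ht ↦ ?_) ?_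
    · simpa only [hF] using (integrableOn_rpow_mul_exp_neg_mul_Ioi ha ht).const_mul _
    · exact IntegrableOn.congr_fun
        ((integrableOn_rpow_mul_exp_neg_mul_Ioi hb one_pos).const_mul _)
        (fun t ht ↦ (inner_s t ht).symm) measurableSet_Ioi
  rw [setIntegral_congr_fun measurableSet_Ioi inner_t,
    setIntegral_congr_fun measurableSet_Ioi inner_s, integral_const_mul, integral_const_mul,
    integral_rpow_mul_exp_neg_mul_Ioi hb one_pos] at swap
  rw [eq_div_iff (Gamma_pos_of_pos hab).ne', mul_comm, swap, div_one, one_rpow, one_mul]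

theorem integral_rpow_smul_comp_mul_rpow_Ioi {E : Type*} [NormedAddCommGroup E] [NormedSpace ℝ E]
    (f : ℝ → E) {k p : ℝ} (hk : 0 < k) (hp : p ≠ 0) (q : ℝ) :
    ∫ x in Ioi (0 : ℝ), x ^ q • f (k * x ^ p) =
      (k ^ (-((q + 1) / p)) / |p|) • ∫ z in Ioi (0 : ℝ), z ^ ((q + 1) / p - 1) • f z := by
  have scale := integral_comp_mul_left_Ioi (fun z ↦ z ^ ((q + 1) / p - 1) • f z) 0 hk
  have power := integral_comp_rpow_Ioi (fun y ↦ (k * y) ^ ((q + 1) / p - 1) • f (k * y)) hp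
  rw [mul_zero, eq_inv_smul_iff₀ hk.ne'] at scale
  rw [← scale, ← power, ← integral_smul, ← integral_smul]
  refine setIntegral_congr_fun measurableSet_Ioi fun x (hx : 0 < x) ↦ ?_
  have hx_exp : x ^ (p - 1) * (x ^ p) ^ ((q + 1) / p - 1) = x ^ q := by
    rw [← rpow_mul hx.le, ← rpow_add hx]
    congr 1
    field_simp
    ring
  have hk_exp : k ^ (-((q + 1) / p)) * k * k ^ ((q + 1) / p - 1) = 1 := by
    rw [rpow_sub_one hk.ne', rpow_neg hk.le]
    field_simp
  simp only [smul_smul]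
  congr 1
  calc x ^ q
      = (k ^ (-((q + 1) / p)) * k * k ^ ((q + 1) / p - 1)) *
          (x ^ (p - 1) * (x ^ p) ^ ((q + 1) / p - 1)) := by rw [hk_exp, hx_exp, one_mul]
    _ = k ^ (-((q + 1) / p)) / |p| *
          (k * (|p| * x ^ (p - 1) * (k * x ^ p) ^ ((q + 1) / p - 1))) := by
        rw [mul_rpow hk.le (rpow_nonneg hx.le p)]
        field_simp

end Integrals

section GaussMultiplication

/-- The function `x ↦ m ^ (x - 1) * ∏ k < m, Γ((x + k) / m)`, normalized to take the value `1` at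
`x = 1`. Gauss's multiplication formula, up to the value of the normalizing constant, says that it
is the Gamma function. -/
def multiplicationGamma (m : ℕ) (x : ℝ) : ℝ :=
  (m : ℝ) ^ (x - 1) * (∏ k ∈ Finset.range m, Gamma ((x + k) / m)) /
    ∏ k ∈ Finset.range m, Gamma ((1 + k) / m)

variable {m : ℕ} {x : ℝ}

theorem prod_Gamma_add_div_pos (m : ℕ) (hx : 0 < x) :
    0 < ∏ k ∈ Finset.range m, Gamma ((x + k) / m) := by
  refine Finset.prod_pos fun k hk ↦ Gamma_pos_of_pos ?_
  have : 0 < m := Nat.zero_lt_of_lt (Finset.mem_range.1 hk)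
  positivity

theorem multiplicationGamma_pos (hm : m ≠ 0) (hx : 0 < x) : 0 < multiplicationGamma m x := by
  have := prod_Gamma_add_div_pos m hx
  have := prod_Gamma_add_div_pos m one_pos
  unfold multiplicationGamma
  positivity

theorem multiplicationGamma_one (m : ℕ) : multiplicationGamma m 1 = 1 := by
  simp [multiplicationGamma, (prod_Gamma_add_div_pos m one_pos).ne']

theorem multiplicationGamma_add_one (hm : m ≠ 0) (hx : x ≠ 0) :
    multiplicationGamma m (x + 1) = x * multiplicationGamma m x := by
  obtain ⟨m, rfl⟩ := Nat.exists_eq_succ_of_ne_zero hm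
  have hm' : (m.succ : ℝ) ≠ 0 := Nat.cast_ne_zero.2 hm
  have shift : ∏ k ∈ Finset.range m.succ, Gamma ((x + 1 + k) / m.succ) =
      x / m.succ * ∏ k ∈ Finset.range m.succ, Gamma ((x + k) / m.succ) := by
    have last : Gamma ((x + 1 + m) / m.succ) = x / m.succ * Gamma (x / m.succ) := by
      rw [← Gamma_add_one (div_ne_zero hx hm')]
      congr 1
      field_simp
      push_cast
      ring
    rw [Finset.prod_range_succ, last, Finset.prod_range_succ']
    push_cast
    simp only [add_zero, add_assoc, add_comm (1 : ℝ)]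
    ring
  rw [multiplicationGamma, multiplicationGamma, shift, add_sub_right_comm, rpow_add_one hm']
  field_simp

theorem convexOn_log_Gamma_add_div {k m : ℝ} (hk : 0 ≤ k) (hm : 0 < m) :
    ConvexOn ℝ (Ioi 0) fun x ↦ log (Gamma ((x + k) / m)) := by
  refine ⟨convex_Ioi 0, fun x (hx : 0 < x) y (hy : 0 < y) s t hs ht hst ↦ ?_⟩
  have hxk : (x + k) / m ∈ Ioi 0 := by simp only [mem_Ioi]; positivity
  have hyk : (y + k) / m ∈ Ioi 0 := by simp only [mem_Ioi]; positivity
  have hcomb : (s • x + t • y + k) / m = s • ((x + k) / m) + t • ((y + k) / m) := by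
    simp only [smul_eq_mul]
    linear_combination -(k / m) * hst
  simp only [hcomb]
  exact convexOn_log_Gamma.2 hxk hyk hs ht hst

theorem log_multiplicationGamma (hm : m ≠ 0) (hx : 0 < x) :
    log (multiplicationGamma m x) = (∑ k ∈ Finset.range m, log (Gamma ((x + k) / m)) +
      x * log m) + (-log m - log (∏ k ∈ Finset.range m, Gamma ((1 + k) / m))) := by
  have hm' : (0 : ℝ) < m := by positivity
  have hprod := prod_Gamma_add_div_pos m hx
  rw [multiplicationGamma, log_div (by positivity) (prod_Gamma_add_div_pos m one_pos).ne',
    log_mul (by positivity) hprod.ne', log_rpow hm',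
    log_prod (Finset.prod_ne_zero_iff.1 hprod.ne')]
  ring

theorem convexOn_log_multiplicationGamma (hm : m ≠ 0) :
    ConvexOn ℝ (Ioi 0) (log ∘ multiplicationGamma m) := by
  have hm' : (0 : ℝ) < m := by positivity
  have hsum : ConvexOn ℝ (Ioi 0) fun x : ℝ ↦
      ∑ k ∈ Finset.range m, log (Gamma ((x + k) / m)) := by
    rw [← Finset.sum_fn]
    exact Finset.sum_induction _ (ConvexOn ℝ (Ioi 0)) (fun _ _ ↦ ConvexOn.add)
      (convexOn_const 0 (convex_Ioi 0)) fun k _ ↦ convexOn_log_Gamma_add_div k.cast_nonneg hm'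
  have hlin : ConvexOn ℝ (Ioi 0) fun x : ℝ ↦ x * log m :=
    (LinearMap.mulRight ℝ (log m)).convexOn (convex_Ioi 0)
  exact ((hsum.add hlin).add_const _).congr fun x hx ↦ (log_multiplicationGamma hm hx).symm

theorem multiplicationGamma_eq_Gamma (hm : m ≠ 0) (hx : 0 < x) :
    multiplicationGamma m x = Gamma x :=
  eq_Gamma_of_log_convex (convexOn_log_multiplicationGamma hm)
    (fun hy ↦ multiplicationGamma_add_one hm hy.ne') (multiplicationGamma_pos hm)
    (multiplicationGamma_one m) hx

theorem prod_Gamma_add_div (hm : m ≠ 0) (hx : 0 < x) :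
    ∏ k ∈ Finset.range m, Gamma ((x + k) / m) =
      (m : ℝ) ^ (1 - x) * Gamma x * ∏ k ∈ Finset.range m, Gamma ((1 + k) / m) := by
  have := prod_Gamma_add_div_pos m one_pos
  have hm' : (0 : ℝ) < m := by positivity
  rw [← multiplicationGamma_eq_Gamma hm hx, multiplicationGamma, ← neg_sub x 1, rpow_neg hm'.le]
  field_simp

theorem Gamma_div_three_mul_Gamma_mul_Gamma (hx : 0 < x) :
    Gamma (x / 3) * Gamma ((x + 1) / 3) * Gamma ((x + 2) / 3) =
      3 ^ (1 - x) * Gamma x * (Gamma (1 / 3) * Gamma (2 / 3)) := by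
  have one_add_two : (1 : ℝ) + 2 = 3 := by norm_num
  simpa [Finset.prod_range_succ, one_add_one_eq_two, one_add_two] using
    prod_Gamma_add_div three_ne_zero hx

end GaussMultiplication

section Tricomi

theorem tricomiU_nonneg {a : ℝ} (ha : 0 ≤ a) (b z : ℝ) : 0 ≤ tricomiU a b z := by
  have := Gamma_nonneg_of_nonneg ha
  refine mul_nonneg (by positivity) (setIntegral_nonneg measurableSet_Ioi fun s (hs : 0 < s) ↦ ?_)
  positivity

theorem integral_rpow_mul_exp_neg_mul_tricomiU {a b c : ℝ} (ha : 0 < a) (hc : 0 < c)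
    (hbc : b < c + 1) :
    ∫ z in Ioi (0 : ℝ), z ^ (c - 1) * (exp (-z) * tricomiU a b z) =
      Gamma c * Gamma (c - b + 1) / Gamma (a + (c - b + 1)) := by
  have hcb : 0 < c - b + 1 := by linarith
  have := Gamma_pos_of_pos ha
  have := Gamma_pos_of_pos hc
  have := Gamma_pos_of_pos hcb
  have := Gamma_pos_of_pos (add_pos ha hcb)
  let F : ℝ → ℝ → ℝ := fun z s ↦
    s ^ (a - 1) * (1 + s) ^ (b - a - 1) * (z ^ (c - 1) * exp (-((1 + s) * z)))
  have inner_s (z : ℝ) : z ^ (c - 1) * (exp (-z) * tricomiU a b z) =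
      (Gamma a)⁻¹ * ∫ s in Ioi 0, F z s := by
    have hF (s : ℝ) : F z s = z ^ (c - 1) * exp (-z) *
        (exp (-z * s) * s ^ (a - 1) * (1 + s) ^ (b - a - 1)) := by
      simp only [F]
      rw [show -((1 + s) * z) = -z + -z * s by ring, exp_add]
      ring
    simp only [hF, integral_const_mul, tricomiU]
    ring
  have inner_z : ∀ s ∈ Ioi (0 : ℝ),
      ∫ z in Ioi 0, F z s = Gamma c * (s ^ (a - 1) * (1 + s) ^ (-(a + (c - b + 1)))) := by
    intro s (hs : 0 < s)
    have hs' : 0 < 1 + s := by positivity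
    simp only [F]
    rw [integral_const_mul, integral_rpow_mul_exp_neg_mul_Ioi hc hs', one_div, inv_rpow hs'.le,
      ← rpow_neg hs'.le, show -(a + (c - b + 1)) = b - a - 1 + -c by ring, rpow_add hs']
    ring
  have swap : ∫ z in Ioi 0, ∫ s in Ioi 0, F z s = ∫ s in Ioi 0, ∫ z in Ioi 0, F z s := by
    refine integral_integral_swap_of_nonneg (by unfold Function.uncurry; fun_prop)
      (ae_restrict_of_forall_mem measurableSet_Ioi fun s (hs : 0 < s) ↦
        ae_restrict_of_forall_mem measurableSet_Ioi fun z (hz : 0 < z) ↦ by positivity)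
      (ae_restrict_of_forall_mem measurableSet_Ioi fun s (hs : 0 < s) ↦
        (integrableOn_rpow_mul_exp_neg_mul_Ioi hc (by positivity)).const_mul _)
      (Integrable.of_integral_ne_zero ?_)
    rw [setIntegral_congr_fun measurableSet_Ioi inner_z, integral_const_mul,
      integral_rpow_mul_one_add_rpow_Ioi ha hcb]
    positivity
  simp only [inner_s]
  rw [integral_const_mul, swap, setIntegral_congr_fun measurableSet_Ioi inner_z,
    integral_const_mul, integral_rpow_mul_one_add_rpow_Ioi ha hcb]
  field_simp

end Tricomi

section Moments

theorem nu2_nonneg (h : ℝ) : 0 ≤ nu2 h := by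
  have := tricomiU_nonneg (a := 1 / 6) (by norm_num) (2 / 3) (8 * h ^ 3 / 9)
  unfold nu2
  positivity

theorem integral_rpow_mul_nu2_eq_Gamma_mul_Gamma {q : ℝ} (hq : -1 < q) :
    ∫ h in Ioi (0 : ℝ), h ^ q * nu2 h =
      2 * 6 ^ ((1 : ℝ) / 3) * √π / Gamma (1 / 3) ^ 2 * ((8 / 9) ^ (-((q + 1) / 3)) / 3) *
        (Gamma ((q + 1) / 3) * Gamma ((q + 2) / 3) / Gamma (q / 3 + 5 / 6)) := by
  let f : ℝ → ℝ := fun z ↦ exp (-z) * tricomiU (1 / 6) (2 / 3) z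
  have hnu2 (h : ℝ) : h ^ q * nu2 h =
      2 * 6 ^ ((1 : ℝ) / 3) * √π / Gamma (1 / 3) ^ 2 * (h ^ q • f (8 / 9 * h ^ (3 : ℝ))) := by
    simp only [f, nu2, rpow_ofNat, smul_eq_mul]
    ring_nf
  simp only [hnu2]
  rw [integral_const_mul, integral_rpow_smul_comp_mul_rpow_Ioi f (by norm_num) three_ne_zero]
  simp only [f, smul_eq_mul]
  rw [integral_rpow_mul_exp_neg_mul_tricomiU (by norm_num) (by linarith) (by linarith),
    abs_of_pos three_pos, show (q + 1) / 3 - 2 / 3 + 1 = (q + 2) / 3 by ring,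
    show 1 / 6 + (q + 2) / 3 = q / 3 + 5 / 6 by ring]
  ring

theorem Gamma_five_sixths :
    Gamma (5 / 6) = 2 ^ ((1 : ℝ) / 3) * √π * Gamma (2 / 3) / Gamma (1 / 3) := by
  have duplication := Gamma_mul_Gamma_add_half (1 / 3)
  rw [show (1 / 3 + 1 / 2 : ℝ) = 5 / 6 by norm_num, show (2 * (1 / 3) : ℝ) = 2 / 3 by norm_num,
    show (1 - 2 / 3 : ℝ) = 1 / 3 by norm_num] at duplication
  rw [eq_div_iff (Gamma_pos_of_pos (by norm_num)).ne']
  linarith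

theorem six_rpow_mul_eight_ninths_rpow_mul_three_rpow (q : ℝ) :
    (6 : ℝ) ^ ((1 : ℝ) / 3) * (8 / 9) ^ (-((q + 1) / 3)) * 3 ^ (-q) =
      3 / 2 * 2 ^ ((1 : ℝ) / 3) * (2 * 3 ^ ((1 : ℝ) / 3)) ^ (-q) := by
  have six : (6 : ℝ) ^ ((1 : ℝ) / 3) = 2 ^ ((1 : ℝ) / 3) * 3 ^ ((1 : ℝ) / 3) := by
    rw [← mul_rpow two_pos.le three_pos.le]
    norm_num
  have eight_ninths :
      (8 / 9 : ℝ) ^ (-((q + 1) / 3)) = 2 ^ (-q - 1) * 3 ^ (2 / 3 * q + 1 - 1 / 3) := by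
    rw [show (8 / 9 : ℝ) = 2 ^ (3 : ℝ) * 3 ^ (-2 : ℝ) by norm_num,
      mul_rpow (by positivity) (by positivity), ← rpow_mul two_pos.le, ← rpow_mul three_pos.le]
    ring_nf
  rw [six, eight_ninths, mul_rpow two_pos.le (by positivity), ← rpow_mul three_pos.le,
    rpow_sub_one two_ne_zero, rpow_sub three_pos, rpow_add_one three_ne_zero,
    show 1 / 3 * -q = 2 / 3 * q + -q by ring, rpow_add three_pos]
  field_simp

theorem integral_rpow_mul_nu2 {q : ℝ} (hq : -1 < q) :
    ∫ h in Ioi (0 : ℝ), h ^ q * nu2 h =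
      Gamma (5 / 6) * (2 * 3 ^ ((1 : ℝ) / 3)) ^ (-q) * Gamma (q + 1) /
        (Gamma (q / 3 + 1) * Gamma (q / 3 + 5 / 6)) := by
  have : 0 < Gamma (1 / 3) := Gamma_pos_of_pos (by norm_num)
  have hA : 0 < Gamma (q / 3 + 1) := Gamma_pos_of_pos (by linarith)
  have hB : 0 < Gamma (q / 3 + 5 / 6) := Gamma_pos_of_pos (by linarith)
  have triple : Gamma ((q + 1) / 3) * Gamma ((q + 2) / 3) * Gamma (q / 3 + 1) =
      3 ^ (-q) * Gamma (q + 1) * (Gamma (1 / 3) * Gamma (2 / 3)) := by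
    convert Gamma_div_three_mul_Gamma_mul_Gamma (x := q + 1) (by linarith) using 3 <;> ring_nf
  rw [integral_rpow_mul_nu2_eq_Gamma_mul_Gamma hq, Gamma_five_sixths]
  generalize Gamma (q / 3 + 1) = A, Gamma (q / 3 + 5 / 6) = B at hA hB triple ⊢
  calc _ = 2 / 3 * √π / Gamma (1 / 3) ^ 2 / (A * B) *
        (6 ^ ((1 : ℝ) / 3) * (8 / 9) ^ (-((q + 1) / 3))) *
        (Gamma ((q + 1) / 3) * Gamma ((q + 2) / 3) * A) := by field_simp
    _ = 2 / 3 * √π * Gamma (2 / 3) / Gamma (1 / 3) * Gamma (q + 1) / (A * B) *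
        (6 ^ ((1 : ℝ) / 3) * (8 / 9) ^ (-((q + 1) / 3)) * 3 ^ (-q)) := by
      rw [triple]
      field_simp
    _ = _ := by
      rw [six_rpow_mul_eight_ninths_rpow_mul_three_rpow]
      field_simp

end Moments

theorem stmt16_general :
    (∀ q : ℝ, -1 < q →
      ∫ h in Ioi (0 : ℝ), h ^ q * nu2 h =
        Gamma (5 / 6) * (2 * 3 ^ ((1 : ℝ) / 3)) ^ (-q) * Gamma (q + 1) /
          (Gamma (q / 3 + 1) * Gamma (q / 3 + 5 / 6))) ∧
    (∀ h : ℝ, 0 ≤ h → 0 ≤ nu2 h) ∧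
    ∫ h in Ioi (0 : ℝ), nu2 h = 1 := by
  refine ⟨fun q ↦ integral_rpow_mul_nu2, fun h _ ↦ nu2_nonneg h, ?_⟩
  have hG : Gamma (5 / 6) ≠ 0 := (Gamma_pos_of_pos (by norm_num)).ne'
  simpa [hG] using integral_rpow_mul_nu2 (q := 0) (by norm_num)

/-- the moments of `ν₂` are
`∫₀^∞ hⁿ·ν₂(h) dh = Γ(5/6)·(2·3^{1/3})^{-n}·n!/(Γ(n/3+1)·Γ(n/3+5/6))`;
in particular `ν₂` is a probability density on `[0,∞)`. -/
theorem stmt16 :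
    (∀ n : ℕ,
      (∫ h in Ioi (0:ℝ), h ^ n * nu2 h) =
        Real.Gamma (5/6) * ((2 * (3:ℝ) ^ ((1:ℝ)/3)) ^ n)⁻¹ * (Nat.factorial n : ℝ) /
          (Real.Gamma ((n : ℝ)/3 + 1) * Real.Gamma ((n : ℝ)/3 + 5/6))) ∧
    (∀ h : ℝ, 0 ≤ h → 0 ≤ nu2 h) ∧
    (∫ h in Ioi (0:ℝ), nu2 h) = 1 := by
  refine ⟨fun n ↦ ?_, stmt16_general.2⟩
  have hn : (-1 : ℝ) < n := neg_one_lt_zero.trans_le n.cast_nonneg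
  simpa [rpow_neg, Gamma_nat_eq_factorial] using stmt16_general.1 n hn
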